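/- Let (p_n)_{n≥1} be an R-Schauder decomposition of a complex Banach space X. Let (a_n)_{n≥1} be a nondecreasing bounded sequence of positive real numbers and let A = M_a ∈ B(X) be the associated multiplier operator. Then for every θ ∈ (0,π), every λ ∈ ℂ ∖ closure(Σ_θ) belongs to the resolvent set of A, and the set {λ (λ I − A)^{-1} : λ ∈ ℂ ∖ closure(Σ_θ)} is R-bounded. -/

import Mathlib

open Filter Topology NormedSpace

/-- Average over all sign vectors `(ε_1,…,ε_k) ∈ {−1,1}^k` of `‖∑_j ε_j v_j‖`. -/
noncomputable def signAvg {X : Type*} [NormedAddCommGroup X] [NormedSpace ℂ X]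
    (k : ℕ) (v : Fin k → X) : ℝ :=
  (2 ^ k : ℝ)⁻¹ * ∑ ε : Fin k → Bool, ‖∑ j : Fin k, (if ε j then (1 : ℝ) else -1) • v j‖

/-- A set of bounded operators on `X` is `R`-bounded. -/
def IsRBounded {X : Type*} [NormedAddCommGroup X] [NormedSpace ℂ X]
    (F : Set (X →L[ℂ] X)) : Prop :=
  ∃ C : ℝ, 0 ≤ C ∧ ∀ (k : ℕ) (T : Fin k → X →L[ℂ] X) (x : Fin k → X),
    (∀ j, T j ∈ F) → signAvg k (fun j => (T j) (x j)) ≤ C * signAvg k x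

/-- `(p n)` is a Schauder decomposition of `X`: the `p n` are pairwise "orthogonal"
bounded projections whose partial sums converge pointwise to the identity.
(Indexing starts at `0`, corresponding to `n = 1` in the classical notation.) -/
def IsSchauderDecomposition {X : Type*} [NormedAddCommGroup X] [NormedSpace ℂ X]
    (p : ℕ → X →L[ℂ] X) : Prop :=
  (∀ n, (p n).comp (p n) = p n) ∧
  (∀ m n, m ≠ n → (p m).comp (p n) = 0) ∧
  (∀ x : X, Tendsto (fun N => ∑ n ∈ Finset.range N, p n x) atTop (nhds x))

/-- The partial sum projection `P_N = ∑_{n<N} p_n`. -/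
noncomputable def partialSum {X : Type*} [NormedAddCommGroup X] [NormedSpace ℂ X]
    (p : ℕ → X →L[ℂ] X) (N : ℕ) : X →L[ℂ] X :=
  ∑ n ∈ Finset.range N, p n

/-- The open sector `Σ_θ = {λ ∈ ℂ∖{0} : |Arg λ| < θ}`. -/
def sector (θ : ℝ) : Set ℂ := {z : ℂ | z ≠ 0 ∧ |Complex.arg z| < θ}

/-!
Outside the sector `|λ - t| ≥ sin (θ/2) (|λ| + t)` for all `t ≥ 0`, so the total variation of
`t ↦ λ / (λ - t)` on `[0, ∞)` is dominated by the telescoping variation of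
`t ↦ sin (θ/2)⁻² |λ| / (|λ| + t)`, uniformly in `λ`. The operator `λ (λ - A)⁻¹` is the multiplier
with coefficients `λ / (λ - a n)`, and summation by parts writes the partial sums of a multiplier
with coefficients `c` as combinations of the `P_N` whose coefficients have total mass at most the
variation norm of `c`. Hence all these operators lie in the strong closure of a multiple of the
absolutely convex hull of `{P_N}`, and passing to that closure preserves `R`-boundedness.
-/

section SignAverages

variable {X : Type*} [NormedAddCommGroup X] [NormedSpace ℂ X] {k : ℕ}

lemma signAvg_add_le (v w : Fin k → X) : signAvg k (v + w) ≤ signAvg k v + signAvg k w := by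
  unfold signAvg
  rw [← mul_add, ← Finset.sum_add_distrib]
  gcongr with ε
  simp only [Pi.add_apply, smul_add, Finset.sum_add_distrib]
  exact norm_add_le _ _

lemma signAvg_smul (c : ℂ) (v : Fin k → X) : signAvg k (c • v) = ‖c‖ * signAvg k v := by
  simp only [signAvg, Pi.smul_apply, smul_comm _ c, ← Finset.smul_sum, norm_smul, ← Finset.mul_sum]
  ring

/-- `signAvg k` as a seminorm on `k`-tuples of vectors. -/
noncomputable def signAvgSeminorm (X : Type*) [NormedAddCommGroup X] [NormedSpace ℂ X] (k : ℕ) :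
    Seminorm ℂ (Fin k → X) :=
  Seminorm.of (signAvg k) signAvg_add_le signAvg_smul

lemma continuous_signAvg : Continuous (signAvg k : (Fin k → X) → ℝ) := by
  unfold signAvg
  fun_prop

lemma signAvg_sign_smul (δ : Fin k → Bool) (v : Fin k → X) :
    signAvg k (fun j => (if δ j then (1 : ℝ) else -1) • v j) = signAvg k v := by
  unfold signAvg
  congr 1
  refine Fintype.sum_equiv
    (Equiv.piCongrRight fun j => if δ j then Equiv.refl Bool else Equiv.boolNot) _ _ fun ε => ?_
  congr 1
  refine Finset.sum_congr rfl fun j _ => ?_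
  cases hδ : δ j <;> cases hε : ε j <;> simp [hδ, hε]

lemma signAvg_map_le_of_mem_convexHull {E : Type*} [AddCommGroup E] [Module ℝ E]
    (φ : Fin k → E →ₗ[ℝ] X) {s : Set E} {B : ℝ}
    (hs : ∀ e : Fin k → E, (∀ j, e j ∈ s) → signAvg k (fun j => φ j (e j)) ≤ B)
    {e : Fin k → E} (he : ∀ j, e j ∈ convexHull ℝ s) :
    signAvg k (fun j => φ j (e j)) ≤ B := by
  have hconv : ConvexOn ℝ Set.univ (fun e : Fin k → E => signAvg k (fun j => φ j (e j))) :=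
    (signAvgSeminorm X k).convexOn.comp_linearMap (LinearMap.piMap φ)
  have hmem : e ∈ convexHull ℝ (Set.univ.pi fun _ : Fin k => s) := by
    rw [convexHull_pi]
    exact fun j _ => he j
  obtain ⟨y, hy, hle⟩ := hconv.exists_ge_of_mem_convexHull (Set.subset_univ _) hmem
  exact hle.trans (hs y fun j => hy j trivial)

lemma signAvg_real_smul_le {t : Fin k → ℝ} (ht : ∀ j, |t j| ≤ 1) (v : Fin k → X) :
    signAvg k (fun j => t j • v j) ≤ signAvg k v := by
  refine signAvg_map_le_of_mem_convexHull (fun j => LinearMap.toSpanSingleton ℝ X (v j))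
    (s := {-1, 1}) (fun e he => ?_) fun j => ?_
  · have hsign : e = fun j => if decide (e j = 1) then (1 : ℝ) else -1 := by
      ext j
      rcases he j with h | h <;> norm_num [Set.mem_singleton_iff.1 h, h]
    rw [hsign]
    exact (signAvg_sign_smul (fun j => decide (e j = 1)) v).le
  · rw [convexHull_pair, segment_eq_Icc (by norm_num)]
    exact abs_le.1 (ht j)

lemma signAvg_complex_smul_le {z : Fin k → ℂ} (hz : ∀ j, ‖z j‖ ≤ 1) (v : Fin k → X) :
    signAvg k (fun j => z j • v j) ≤ 2 * signAvg k v := by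
  have hre : signAvg k (fun j => (z j).re • v j) ≤ signAvg k v :=
    signAvg_real_smul_le (fun j => (Complex.abs_re_le_norm _).trans (hz j)) v
  have him : signAvg k (fun j => (z j).im • v j) ≤ signAvg k v :=
    signAvg_real_smul_le (fun j => (Complex.abs_im_le_norm _).trans (hz j)) v
  have hsplit : (fun j => z j • v j) =
      (fun j => (z j).re • v j) + Complex.I • fun j => (z j).im • v j := by
    ext j
    conv_lhs => rw [← Complex.re_add_im (z j), add_smul, mul_comm, mul_smul]
    rfl
  calc signAvg k (fun j => z j • v j)
      ≤ signAvg k (fun j => (z j).re • v j) + signAvg k (Complex.I • fun j => (z j).im • v j) :=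
        hsplit ▸ signAvg_add_le _ _
    _ = signAvg k (fun j => (z j).re • v j) + signAvg k (fun j => (z j).im • v j) := by
        rw [signAvg_smul, Complex.norm_I, one_mul]
    _ ≤ 2 * signAvg k v := by linarith

end SignAverages

namespace IsRBounded

variable {X : Type*} [NormedAddCommGroup X] [NormedSpace ℂ X] {F G : Set (X →L[ℂ] X)}

lemma mono (hG : IsRBounded G) (hFG : F ⊆ G) : IsRBounded F := by
  obtain ⟨C, hC0, hC⟩ := hG
  exact ⟨C, hC0, fun k T x hT => hC k T x fun j => hFG (hT j)⟩

open scoped Pointwise in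
lemma smul_set (hF : IsRBounded F) (c : ℂ) : IsRBounded (c • F) := by
  obtain ⟨C, hC0, hC⟩ := hF
  refine ⟨‖c‖ * C, by positivity, fun k T x hT => ?_⟩
  choose S hS hST using hT
  calc signAvg k (fun j => T j (x j)) = signAvg k (c • fun j => S j (x j)) := by
        simp only [← hST]; rfl
    _ = ‖c‖ * signAvg k (fun j => S j (x j)) := signAvg_smul _ _
    _ ≤ ‖c‖ * (C * signAvg k x) := by gcongr; exact hC k S x hS
    _ = ‖c‖ * C * signAvg k x := by ring

lemma balancedHull (hF : IsRBounded F) : IsRBounded (balancedHull ℂ F) := by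
  obtain ⟨C, hC0, hC⟩ := hF
  refine ⟨2 * C, by positivity, fun k T x hT => ?_⟩
  choose z hz S hS hST using fun j => mem_balancedHull_iff.1 (hT j)
  calc signAvg k (fun j => T j (x j)) = signAvg k (fun j => z j • S j (x j)) := by
        simp only [← hST]; rfl
    _ ≤ 2 * signAvg k (fun j => S j (x j)) := signAvg_complex_smul_le hz _
    _ ≤ 2 * (C * signAvg k x) := by gcongr; exact hC k S x hS
    _ = 2 * C * signAvg k x := by ring

lemma convexHull (hF : IsRBounded F) : IsRBounded (convexHull ℝ F) := by
  obtain ⟨C, hC0, hC⟩ := hF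
  exact ⟨C, hC0, fun k T x hT => signAvg_map_le_of_mem_convexHull
    (fun j => (ContinuousLinearMap.apply ℂ X (x j)).toLinearMap.restrictScalars ℝ)
    (fun S hS => hC k S x hS) hT⟩

lemma pointwiseClosure (hF : IsRBounded F) :
    IsRBounded {T : X →L[ℂ] X | ⇑T ∈ closure ((fun S : X →L[ℂ] X => ⇑S) '' F)} := by
  obtain ⟨C, hC0, hC⟩ := hF
  refine ⟨C, hC0, fun k T x hT => ?_⟩
  have hclosed : IsClosed {f : Fin k → X → X | signAvg k (fun j => f j (x j)) ≤ C * signAvg k x} :=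
    isClosed_le (continuous_signAvg.comp (by fun_prop)) continuous_const
  have hsub : (Set.univ.pi fun _ : Fin k => (fun S : X →L[ℂ] X => ⇑S) '' F) ⊆
      {f | signAvg k (fun j => f j (x j)) ≤ C * signAvg k x} := by
    intro f hf
    choose S hS hSf using fun j => hf j trivial
    simpa only [Set.mem_ofPred_eq, ← hSf] using hC k S x hS
  have hmem : (fun j => ⇑(T j)) ∈
      closure (Set.univ.pi fun _ : Fin k => (fun S : X →L[ℂ] X => ⇑S) '' F) := by
    rw [closure_pi_set]
    exact fun j _ => hT j
  exact closure_minimal hsub hclosed hmem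

end IsRBounded

lemma sum_smul_mem_convexHull_balancedHull {𝕜 E ι : Type*} [RCLike 𝕜] [AddCommGroup E]
    [Module 𝕜 E] [Module ℝ E] [IsScalarTower ℝ 𝕜 E] {s : Set E} {t : Finset ι} {w : ι → 𝕜}
    {v : ι → E} (ht : t.Nonempty) (hw : ∑ i ∈ t, ‖w i‖ ≤ 1) (hv : ∀ i ∈ t, v i ∈ s) :
    ∑ i ∈ t, w i • v i ∈ convexHull ℝ (balancedHull 𝕜 s) := by
  obtain ⟨i₀, hi₀⟩ := ht
  have hzero : (0 : E) ∈ convexHull ℝ (balancedHull 𝕜 s) :=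
    subset_convexHull ℝ _ (mem_balancedHull_iff.2 ⟨0, by simp, v i₀, hv i₀ hi₀, zero_smul _ _⟩)
  have hpolar : ∀ i, ‖w i‖ • (w i / (‖w i‖ : 𝕜)) • v i = w i • v i := by
    intro i
    rw [← smul_assoc, RCLike.real_smul_eq_coe_mul]
    rcases eq_or_ne (w i) 0 with hi | hi
    · simp [hi]
    · rw [mul_div_cancel₀ _ (by simpa using hi)]
  rcases (Finset.sum_nonneg fun i (_ : i ∈ t) => norm_nonneg (w i)).eq_or_lt with hW | hW
  · have hwzero := (Finset.sum_eq_zero_iff_of_nonneg fun i _ => norm_nonneg (w i)).1 hW.symm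
    rwa [Finset.sum_eq_zero fun i hi => by rw [norm_eq_zero.1 (hwzero i hi), zero_smul]]
  · have hcenter : t.centerMass (fun i => ‖w i‖) (fun i => (w i / (‖w i‖ : 𝕜)) • v i) ∈
        convexHull ℝ (balancedHull 𝕜 s) := by
      refine t.centerMass_mem_convexHull (fun i _ => norm_nonneg _) hW fun i hi =>
        mem_balancedHull_iff.2 ⟨_, ?_, v i, hv i hi, rfl⟩
      rw [norm_div, RCLike.norm_ofReal, abs_norm]
      exact div_self_le_one _
    have hscaled := (convex_convexHull ℝ _).smul_mem_of_zero_mem hzero hcenter ⟨hW.le, hw⟩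
    simpa only [Finset.centerMass, smul_inv_smul₀ hW.ne', hpolar] using hscaled

/-- The sequence `c` has norm at most `V` in the space of sequences of bounded variation, normed by
`∑ m, ‖c (m + 1) - c m‖ + ‖lim c‖`. Truncating at every `N` avoids the infinite sum and the
limit. -/
def VariationNormLE (c : ℕ → ℂ) (V : ℝ) : Prop :=
  ∀ N, ∑ m ∈ Finset.range N, ‖c (m + 1) - c m‖ + ‖c N‖ ≤ V

namespace VariationNormLE

variable {c : ℕ → ℂ} {V W : ℝ}

lemma mono (hc : VariationNormLE c V) (hVW : V ≤ W) : VariationNormLE c W :=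
  fun N => (hc N).trans hVW

lemma const_smul (hc : VariationNormLE c V) (z : ℂ) : VariationNormLE (z • c) (‖z‖ * V) := by
  intro N
  simp only [Pi.smul_apply, ← smul_sub, norm_smul, ← Finset.mul_sum, ← mul_add]
  gcongr
  exact hc N

lemma summable (hc : VariationNormLE c V) : Summable fun m => ‖c (m + 1) - c m‖ :=
  summable_of_sum_range_le (fun _ => norm_nonneg _)
    fun N => (le_add_of_nonneg_right (norm_nonneg _)).trans (hc N)

lemma of_telescoping {f : ℕ → ℝ} (hstep : ∀ m, ‖c (m + 1) - c m‖ ≤ f m - f (m + 1))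
    (hlast : ∀ N, ‖c N‖ ≤ f N) : VariationNormLE c (f 0) := by
  intro N
  have hsum : ∑ m ∈ Finset.range N, ‖c (m + 1) - c m‖ ≤ f 0 - f N :=
    (Finset.sum_le_sum fun m _ => hstep m).trans_eq (Finset.sum_range_sub' f N)
  linarith [hlast N]

end VariationNormLE

/-- `T` is the multiplier `M_c` of the sequence `p`, i.e. `T x = ∑ n, c n • p n x` for all `x`, the
series converging as a limit of partial sums. -/
def IsMultiplier {X : Type*} [NormedAddCommGroup X] [NormedSpace ℂ X]
    (p : ℕ → X →L[ℂ] X) (c : ℕ → ℂ) (T : X →L[ℂ] X) : Prop :=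
  ∀ x, Tendsto (fun N => ∑ n ∈ Finset.range N, c n • p n x) atTop (𝓝 (T x))

section Multipliers

variable {X : Type*} [NormedAddCommGroup X] [NormedSpace ℂ X] {p : ℕ → X →L[ℂ] X} {c d : ℕ → ℂ}
  {S T : X →L[ℂ] X}

namespace IsMultiplier

lemma unique (hS : IsMultiplier p c S) (hT : IsMultiplier p c T) : S = T :=
  ContinuousLinearMap.ext fun x => tendsto_nhds_unique (hS x) (hT x)

lemma sub (hS : IsMultiplier p c S) (hT : IsMultiplier p d T) :
    IsMultiplier p (c - d) (S - T) := by
  intro x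
  simpa only [Pi.sub_apply, sub_smul, Finset.sum_sub_distrib] using! (hS x).sub (hT x)

lemma const_smul (hT : IsMultiplier p c T) (z : ℂ) : IsMultiplier p (z • c) (z • T) := by
  intro x
  simpa only [Pi.smul_apply, smul_assoc, ← Finset.smul_sum] using! (hT x).const_smul z

end IsMultiplier

namespace IsSchauderDecomposition

lemma apply_apply (hp : IsSchauderDecomposition p) (m n : ℕ) (x : X) :
    p m (p n x) = if m = n then p n x else 0 := by
  obtain ⟨hidem, horth, -⟩ := hp
  split_ifs with h
  · subst h
    exact DFunLike.congr_fun (hidem m) x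
  · exact DFunLike.congr_fun (horth m n h) x

lemma apply_multiplier (hp : IsSchauderDecomposition p) (hT : IsMultiplier p c T) (n : ℕ) (x : X) :
    p n (T x) = c n • p n x := by
  refine tendsto_nhds_unique (((p n).continuous.tendsto _).comp (hT x))
    (tendsto_const_nhds.congr' ?_)
  filter_upwards [eventually_gt_atTop n] with N hN
  simp [hp.apply_apply, hN]

lemma isMultiplier_mul (hp : IsSchauderDecomposition p) (hS : IsMultiplier p c S)
    (hT : IsMultiplier p d T) : IsMultiplier p (c * d) (S * T) := by
  intro x
  simpa only [Pi.mul_apply, mul_smul, hp.apply_multiplier hT] using! hS (T x)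

lemma isMultiplier_one (hp : IsSchauderDecomposition p) : IsMultiplier p 1 1 := by
  intro x
  simpa only [Pi.one_apply, one_smul] using! hp.2.2 x

lemma isMultiplier_resolvent_denom (hp : IsSchauderDecomposition p) (hT : IsMultiplier p c T)
    (lam : ℂ) : IsMultiplier p (fun n => lam - c n) (algebraMap ℂ (X →L[ℂ] X) lam - T) := by
  rw [Algebra.algebraMap_eq_smul_one]
  convert (hp.isMultiplier_one.const_smul lam).sub hT using 1
  ext n
  simp

lemma mul_eq_one_of_multipliers (hp : IsSchauderDecomposition p) (hS : IsMultiplier p c S)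
    (hT : IsMultiplier p d T) (hcd : c * d = 1) : S * T = 1 :=
  (hcd ▸ hp.isMultiplier_mul hS hT).unique hp.isMultiplier_one

lemma exists_isMultiplier [CompleteSpace X] (hp : IsSchauderDecomposition p)
    (hc : Summable fun m => ‖c (m + 1) - c m‖) : ∃ T : X →L[ℂ] X, IsMultiplier p c T := by
  obtain ⟨l, hl⟩ : ∃ l, Tendsto c atTop (𝓝 l) :=
    cauchySeq_tendsto_of_complete
      (cauchySeq_of_summable_dist (by simpa only [dist_eq_norm'] using hc))
  have hseries : ∀ x, ∃ y, Tendsto (fun N => ∑ n ∈ Finset.range N, c n • p n x) atTop (𝓝 y) := by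
    intro x
    obtain ⟨K, hK⟩ := (Metric.isBounded_range_of_tendsto _ (hp.2.2 x)).exists_norm_le
    have hsum : Summable fun m => (c (m + 1) - c m) • ∑ n ∈ Finset.range (m + 1), p n x := by
      refine Summable.of_norm_bounded (hc.mul_right K) fun m => ?_
      rw [norm_smul]
      exact mul_le_mul_of_nonneg_left (hK _ ⟨m + 1, rfl⟩) (norm_nonneg _)
    refine ⟨l • x - ∑' m, (c (m + 1) - c m) • ∑ n ∈ Finset.range (m + 1), p n x,
      (tendsto_add_atTop_iff_nat 1).1 ?_⟩
    simp only [fun N => Finset.sum_range_by_parts c (p · x) (N + 1), add_tsub_cancel_right]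
    exact (hl.smul ((tendsto_add_atTop_iff_nat 1).2 (hp.2.2 x))).sub hsum.hasSum.tendsto_sum_nat
  choose f hf using hseries
  have hlim : Tendsto (fun N x => (∑ n ∈ Finset.range N, c n • p n) x) atTop (𝓝 f) :=
    tendsto_pi_nhds.2 fun x => by simpa using hf x
  exact ⟨continuousLinearMapOfTendsto _ hlim, hf⟩

lemma isUnit_of_isMultiplier [CompleteSpace X] (hp : IsSchauderDecomposition p)
    (hT : IsMultiplier p c T) (hc : ∀ n, c n ≠ 0)
    (hvar : Summable fun m => ‖(c (m + 1))⁻¹ - (c m)⁻¹‖) : IsUnit T := by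
  obtain ⟨S, hS⟩ := hp.exists_isMultiplier (c := c⁻¹) hvar
  have hmul : c * c⁻¹ = 1 := funext fun n => mul_inv_cancel₀ (hc n)
  exact ⟨⟨T, S, hp.mul_eq_one_of_multipliers hT hS hmul,
    hp.mul_eq_one_of_multipliers hS hT (mul_comm c c⁻¹ ▸ hmul)⟩, rfl⟩

lemma isMultiplier_ringInverse (hp : IsSchauderDecomposition p) (hT : IsMultiplier p c T)
    (hunit : IsUnit T) (hc : ∀ n, c n ≠ 0) : IsMultiplier p c⁻¹ (Ring.inverse T) := by
  intro x
  have hTinv : T (Ring.inverse T x) = x :=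
    DFunLike.congr_fun (Ring.mul_inverse_cancel T hunit) x
  have hcoord : ∀ n, c⁻¹ n • p n x = p n (Ring.inverse T x) := fun n => by
    conv_lhs => rw [← hTinv, hp.apply_multiplier hT, Pi.inv_apply, inv_smul_smul₀ (hc n)]
  simpa only [hcoord] using hp.2.2 (Ring.inverse T x)

end IsSchauderDecomposition

lemma VariationNormLE.sum_smul_mem_hull_partialSum (hc : VariationNormLE c 1) (N : ℕ) :
    ∑ n ∈ Finset.range (N + 1), c n • p n ∈
      convexHull ℝ (balancedHull ℂ (Set.range fun N => partialSum p (N + 1))) := by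
  let w : ℕ → ℂ := Function.update (fun m => -(c (m + 1) - c m)) N (c N)
  have hw_last : w N = c N := Function.update_self ..
  have hw_lt : ∀ m ∈ Finset.range N, w m = -(c (m + 1) - c m) := fun m hm =>
    Function.update_of_ne (Finset.mem_range.1 hm).ne ..
  have hmass : ∑ m ∈ Finset.range (N + 1), ‖w m‖ ≤ 1 := by
    rw [Finset.sum_range_succ, hw_last, Finset.sum_congr rfl fun m hm => by rw [hw_lt m hm]]
    simpa only [norm_neg] using hc N
  have hw_sum : ∑ m ∈ Finset.range N, w m • partialSum p (m + 1) =
      -∑ m ∈ Finset.range N, (c (m + 1) - c m) • partialSum p (m + 1) := by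
    rw [← Finset.sum_neg_distrib]
    exact Finset.sum_congr rfl fun m hm => by rw [hw_lt m hm, neg_smul]
  have hparts : ∑ n ∈ Finset.range (N + 1), c n • p n =
      ∑ m ∈ Finset.range (N + 1), w m • partialSum p (m + 1) :=
    calc ∑ n ∈ Finset.range (N + 1), c n • p n
        = c N • partialSum p (N + 1) -
            ∑ m ∈ Finset.range N, (c (m + 1) - c m) • partialSum p (m + 1) :=
          Finset.sum_range_by_parts c p (N + 1)
      _ = ∑ m ∈ Finset.range (N + 1), w m • partialSum p (m + 1) := by
          rw [Finset.sum_range_succ, hw_last, hw_sum]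
          abel
  rw [hparts]
  exact sum_smul_mem_convexHull_balancedHull Finset.nonempty_range_add_one hmass
    fun m _ => ⟨m, rfl⟩

lemma isRBounded_multipliers (hR : IsRBounded (Set.range fun N => partialSum p (N + 1))) (V : ℝ) :
    IsRBounded {T : X →L[ℂ] X | ∃ c, VariationNormLE c V ∧ IsMultiplier p c T} := by
  set W := max V 1
  have hW : 0 < W := lt_max_of_lt_right one_pos
  refine (hR.balancedHull.convexHull.pointwiseClosure.smul_set (W : ℂ)).mono ?_
  rintro T ⟨c, hc, hT⟩
  rw [Set.mem_smul_set_iff_inv_smul_mem₀ (by exact_mod_cast hW.ne')]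
  have hc_unit : VariationNormLE ((W : ℂ)⁻¹ • c) 1 := by
    refine (hc.const_smul _).mono ?_
    rw [norm_inv, Complex.norm_of_nonneg hW.le, inv_mul_le_one₀ hW]
    exact le_max_left V 1
  refine mem_closure_of_tendsto (tendsto_pi_nhds.2 fun x =>
    (tendsto_add_atTop_iff_nat 1).2 (hT.const_smul (W : ℂ)⁻¹ x)) (.of_forall fun N =>
      ⟨_, hc_unit.sum_smul_mem_hull_partialSum N, ?_⟩)
  ext x
  simp

end Multipliers

section Sector

variable {θ : ℝ} {lam : ℂ}

lemma ofReal_mem_closure_sector (hθ : 0 < θ) {t : ℝ} (ht : 0 ≤ t) :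
    (t : ℂ) ∈ closure (sector θ) := by
  refine map_mem_closure Complex.continuous_ofReal ((closure_Ioi (0 : ℝ)).ge ht)
    fun u (hu : 0 < u) => ?_
  exact ⟨by exact_mod_cast hu.ne', by rwa [Complex.arg_ofReal_of_nonneg hu.le, abs_zero]⟩

lemma sub_ofReal_ne_zero_of_notMem_closure_sector (hθ : 0 < θ) (hlam : lam ∉ closure (sector θ))
    {t : ℝ} (ht : 0 ≤ t) : lam - t ≠ 0 :=
  sub_ne_zero.2 fun h => hlam (h ▸ ofReal_mem_closure_sector hθ ht)

lemma ne_zero_of_notMem_closure_sector (hθ : 0 < θ) (hlam : lam ∉ closure (sector θ)) :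
    lam ≠ 0 := by
  simpa using sub_ofReal_ne_zero_of_notMem_closure_sector hθ hlam le_rfl

lemma sin_half_mul_le_norm_sub (hθ₀ : 0 ≤ θ) (hlam : lam ∉ sector θ)
    {t : ℝ} (ht : 0 ≤ t) : Real.sin (θ / 2) * (‖lam‖ + t) ≤ ‖lam - t‖ := by
  rcases eq_or_ne lam 0 with rfl | hlam₀
  · simpa [abs_of_nonneg ht] using mul_le_of_le_one_left ht (Real.sin_le_one (θ / 2))
  have harg : θ ≤ |lam.arg| := not_lt.1 fun h => hlam ⟨hlam₀, h⟩
  have hcos : Real.cos lam.arg ≤ 1 - 2 * Real.sin (θ / 2) ^ 2 := by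
    calc Real.cos lam.arg = Real.cos |lam.arg| := (Real.cos_abs _).symm
      _ ≤ Real.cos θ := Real.cos_le_cos_of_nonneg_of_le_pi hθ₀ (Complex.abs_arg_le_pi _) harg
      _ = 1 - 2 * Real.sin (θ / 2) ^ 2 := by
        rw [Real.sin_sq_eq_half_sub, mul_div_cancel₀ θ two_ne_zero]
        ring
  have hcosines : ‖lam - t‖ ^ 2 = ‖lam‖ ^ 2 + t ^ 2 - 2 * (‖lam‖ * t) * Real.cos lam.arg := by
    rw [Complex.sq_norm, Complex.normSq_sub, Complex.normSq_ofReal, ← Complex.sq_norm,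
      Complex.conj_ofReal, Complex.re_mul_ofReal, ← Complex.norm_mul_cos_arg lam]
    ring
  refine le_of_sq_le_sq ?_ (norm_nonneg _)
  calc (Real.sin (θ / 2) * (‖lam‖ + t)) ^ 2
      = Real.sin (θ / 2) ^ 2 * (‖lam‖ - t) ^ 2 + 4 * (‖lam‖ * t) * Real.sin (θ / 2) ^ 2 := by ring
    _ ≤ (‖lam‖ - t) ^ 2 + 4 * (‖lam‖ * t) * Real.sin (θ / 2) ^ 2 := by
        gcongr
        exact mul_le_of_le_one_left (sq_nonneg _) (Real.sin_sq_le_one _)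
    _ = ‖lam‖ ^ 2 + t ^ 2 - 2 * (‖lam‖ * t) * (1 - 2 * Real.sin (θ / 2) ^ 2) := by ring
    _ ≤ ‖lam‖ ^ 2 + t ^ 2 - 2 * (‖lam‖ * t) * Real.cos lam.arg := by gcongr
    _ = ‖lam - t‖ ^ 2 := hcosines.symm

lemma norm_div_sub_sub_div_sub_le {s t u : ℝ} (hs : 0 < s) (hlam : lam ≠ 0) (ht : 0 ≤ t)
    (htu : t ≤ u) (hst : s * (‖lam‖ + t) ≤ ‖lam - t‖) (hsu : s * (‖lam‖ + u) ≤ ‖lam - u‖) :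
    ‖lam / (lam - u) - lam / (lam - t)‖ ≤
      (s ^ 2)⁻¹ * (‖lam‖ / (‖lam‖ + t)) - (s ^ 2)⁻¹ * (‖lam‖ / (‖lam‖ + u)) := by
  have hr : 0 < ‖lam‖ := norm_pos_iff.2 hlam
  have hrt : 0 < ‖lam‖ + t := by positivity
  have hru : 0 < ‖lam‖ + u := by linarith
  have hnet : lam - t ≠ 0 := norm_pos_iff.1 ((mul_pos hs hrt).trans_le hst)
  have hneu : lam - u ≠ 0 := norm_pos_iff.1 ((mul_pos hs hru).trans_le hsu)
  calc ‖lam / (lam - u) - lam / (lam - t)‖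
      = ‖lam * ((u - t : ℝ) : ℂ) / ((lam - t) * (lam - u))‖ := by
        congr 1
        push_cast
        field_simp
        ring
    _ = ‖lam‖ * (u - t) / (‖lam - t‖ * ‖lam - u‖) := by
        rw [norm_div, norm_mul, norm_mul, Complex.norm_of_nonneg (sub_nonneg.2 htu)]
    _ ≤ ‖lam‖ * (u - t) / ((s * (‖lam‖ + t)) * (s * (‖lam‖ + u))) := by
        have := sub_nonneg.2 htu
        gcongr
    _ = (s ^ 2)⁻¹ * (‖lam‖ / (‖lam‖ + t)) - (s ^ 2)⁻¹ * (‖lam‖ / (‖lam‖ + u)) := by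
        field_simp
        ring

lemma variationNormLE_div_sub (hθ : θ ∈ Set.Ioo 0 Real.pi) (hlam : lam ∉ closure (sector θ))
    {a : ℕ → ℝ} (ha : Monotone a) (ha₀ : ∀ n, 0 ≤ a n) :
    VariationNormLE (fun n => lam / (lam - a n)) (Real.sin (θ / 2) ^ 2)⁻¹ := by
  set s := Real.sin (θ / 2)
  have hs : 0 < s := Real.sin_pos_of_pos_of_lt_pi (by linarith [hθ.1]) (by linarith [hθ.1, hθ.2])
  have hlam₀ : lam ≠ 0 := ne_zero_of_notMem_closure_sector hθ.1 hlam
  have hr : 0 < ‖lam‖ := norm_pos_iff.2 hlam₀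
  have hlower : ∀ n, s * (‖lam‖ + a n) ≤ ‖lam - a n‖ := fun n =>
    sin_half_mul_le_norm_sub hθ.1.le (fun h => hlam (subset_closure h)) (ha₀ n)
  have hlast : ∀ n, ‖lam / (lam - a n)‖ ≤ (s ^ 2)⁻¹ * (‖lam‖ / (‖lam‖ + a n)) := by
    intro n
    have hrn : 0 < ‖lam‖ + a n := add_pos_of_pos_of_nonneg hr (ha₀ n)
    calc ‖lam / (lam - a n)‖ = ‖lam‖ / ‖lam - a n‖ := norm_div _ _
      _ ≤ ‖lam‖ / (s ^ 2 * (‖lam‖ + a n)) := by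
          gcongr
          refine le_trans ?_ (hlower n)
          gcongr
          exact pow_le_of_le_one hs.le (Real.sin_le_one _) two_ne_zero
      _ = (s ^ 2)⁻¹ * (‖lam‖ / (‖lam‖ + a n)) := by field_simp
  refine (VariationNormLE.of_telescoping (fun m => norm_div_sub_sub_div_sub_le hs hlam₀ (ha₀ m)
    (ha m.le_succ) (hlower m) (hlower (m + 1))) hlast).mono ?_
  have hr₀ : 0 < ‖lam‖ + a 0 := add_pos_of_pos_of_nonneg hr (ha₀ 0)
  refine mul_le_of_le_one_right (by positivity) ((div_le_one hr₀).2 ?_)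
  exact le_add_of_nonneg_right (ha₀ 0)

end Sector

section Resolvents

variable {X : Type*} [NormedAddCommGroup X] [NormedSpace ℂ X] {p : ℕ → X →L[ℂ] X} {a : ℕ → ℝ}
  {A : X →L[ℂ] X} {θ : ℝ} {lam : ℂ}

lemma mem_resolventSet_of_notMem_closure_sector [CompleteSpace X] (hp : IsSchauderDecomposition p)
    (ha : Monotone a) (ha₀ : ∀ n, 0 ≤ a n) (hA : IsMultiplier p (fun n => a n) A)
    (hθ : θ ∈ Set.Ioo 0 Real.pi) (hlam : lam ∉ closure (sector θ)) : lam ∈ resolventSet ℂ A := by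
  have hlam₀ : lam ≠ 0 := ne_zero_of_notMem_closure_sector hθ.1 hlam
  have hvar : Summable fun m => ‖(lam - a (m + 1))⁻¹ - (lam - a m)⁻¹‖ := by
    simpa [div_eq_mul_inv, hlam₀] using
      ((variationNormLE_div_sub hθ hlam ha ha₀).const_smul lam⁻¹).summable
  exact hp.isUnit_of_isMultiplier (hp.isMultiplier_resolvent_denom hA lam)
    (fun n => sub_ofReal_ne_zero_of_notMem_closure_sector hθ.1 hlam (ha₀ n)) hvar

lemma isMultiplier_smul_ringInverse (hp : IsSchauderDecomposition p) {c : ℕ → ℂ}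
    (hA : IsMultiplier p c A) (hlam : lam ∈ resolventSet ℂ A) (hc : ∀ n, lam - c n ≠ 0) :
    IsMultiplier p (fun n => lam / (lam - c n))
      (lam • Ring.inverse (algebraMap ℂ (X →L[ℂ] X) lam - A)) := by
  simpa only [div_eq_mul_inv] using! (hp.isMultiplier_ringInverse
    (hp.isMultiplier_resolvent_denom hA lam) hlam hc).const_smul lam

end Resolvents

theorem statement3_general {X : Type*} [NormedAddCommGroup X] [NormedSpace ℂ X] [CompleteSpace X]
    (p : ℕ → X →L[ℂ] X) (hp : IsSchauderDecomposition p)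
    (hR : IsRBounded (Set.range fun N : ℕ => partialSum p (N + 1)))
    (a : ℕ → ℝ) (ha : Monotone a) (ha₀ : ∀ n, 0 ≤ a n)
    (A : X →L[ℂ] X) (hA : IsMultiplier p (fun n => a n) A)
    (θ : ℝ) (hθ : θ ∈ Set.Ioo (0 : ℝ) Real.pi) :
    (∀ lam : ℂ, lam ∉ closure (sector θ) → lam ∈ resolventSet ℂ A) ∧
    IsRBounded {S : X →L[ℂ] X | ∃ lam : ℂ, lam ∉ closure (sector θ) ∧
      S = lam • Ring.inverse (algebraMap ℂ (X →L[ℂ] X) lam - A)} := by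
  have hres : ∀ lam : ℂ, lam ∉ closure (sector θ) → lam ∈ resolventSet ℂ A := fun _ hlam =>
    mem_resolventSet_of_notMem_closure_sector hp ha ha₀ hA hθ hlam
  refine ⟨hres, (isRBounded_multipliers hR (Real.sin (θ / 2) ^ 2)⁻¹).mono ?_⟩
  rintro _ ⟨lam, hlam, rfl⟩
  exact ⟨_, variationNormLE_div_sub hθ hlam ha ha₀, isMultiplier_smul_ringInverse hp hA
    (hres lam hlam) fun n => sub_ofReal_ne_zero_of_notMem_closure_sector hθ.1 hlam (ha₀ n)⟩

/-- For an `R`-Schauder decomposition and a nondecreasing bounded positive sequence `a`,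
the multiplier `A = M_a` is `R`-sectorial of `R`-type `0`. -/
theorem statement3 {X : Type*} [NormedAddCommGroup X] [NormedSpace ℂ X] [CompleteSpace X]
    (p : ℕ → X →L[ℂ] X) (hp : IsSchauderDecomposition p)
    (hR : IsRBounded (Set.range fun N : ℕ => partialSum p (N + 1)))
    (a : ℕ → ℝ) (ha : Monotone a) (hapos : ∀ n, 0 < a n) (habd : ∃ M : ℝ, ∀ n, a n ≤ M)
    (A : X →L[ℂ] X)
    (hA : ∀ x : X, Tendsto (fun N => ∑ n ∈ Finset.range N, ((a n : ℝ) : ℂ) • p n x)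
      atTop (nhds (A x)))
    (θ : ℝ) (hθ : θ ∈ Set.Ioo (0 : ℝ) Real.pi) :
    (∀ lam : ℂ, lam ∉ closure (sector θ) → lam ∈ resolventSet ℂ A) ∧
    IsRBounded {S : X →L[ℂ] X | ∃ lam : ℂ, lam ∉ closure (sector θ) ∧
      S = lam • Ring.inverse (algebraMap ℂ (X →L[ℂ] X) lam - A)} := by
  exact statement3_general p hp hR a ha (fun n => (hapos n).le) A hA θ hθ
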